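/- Five-term functional equation for the characteristic-p dilogarithm ℓi₂^(p): Let k be a field of characteristic p ≥ 5 and let x = s + at, y = u + bt be elements of (k[t]/(t²))^♭ (i.e. x(1−x) and y(1−y) are units, meaning s, u ∉ {0,1}) with x − y a unit (s ≠ u). Then ℓi₂^(p)([x]) − ℓi₂^(p)([y]) + ℓi₂^(p)([y/x]) − ℓi₂^(p)([(1−x⁻¹)/(1−y⁻¹)]) + ℓi₂^(p)([(1−x)/(1−y)]) = 0, where ℓi₂^(p)([s+αt]) = (α^p/(s^p(1−s)^p))·£₁(s) and £₁(s) = ∑_{1≤i≤p-1} s^i/i. -/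

import Mathlib

open Finset TrivSqZeroExt

/-- The Kontsevich 1½-logarithm `£₁(s) = ∑_{i=1}^{p-1} s^i / i`. -/
noncomputable def kontsevichLog (p : ℕ) {k : Type*} [Field k] (s : k) : k :=
  ∑ i ∈ Finset.Icc 1 (p - 1), (i : k)⁻¹ * s ^ i

/-- The characteristic `p` dilogarithm `ℓi₂^(p)` on `k₂ = k[t]/(t²)`
(realized as dual numbers): `ℓi₂^(p)(s + αt) = (α^p/(s^p(1-s)^p))·£₁(s)`. -/
noncomputable def li2p (p : ℕ) {k : Type*} [Field k] (z : DualNumber k) : k :=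
  (snd z) ^ p / ((fst z) ^ p * (1 - fst z) ^ p) * kontsevichLog p (fst z)

/-- The divided Frobenius defect `((a + b)^p - a^p - b^p) / p`, as an integral polynomial
expression in `a` and `b`. -/
def frobDefect (p : ℕ) {R : Type*} [CommRing R] (a b : R) : R :=
  ∑ i ∈ Finset.Icc 1 (p - 1), ((p.choose i / p : ℕ) : R) * a ^ i * b ^ (p - i)

theorem map_frobDefect (p : ℕ) {R S : Type*} [CommRing R] [CommRing S] (f : R →+* S) (a b : R) :
    f (frobDefect p a b) = frobDefect p (f a) (f b) := by
  simp [frobDefect]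

theorem natCast_mul_frobDefect (p : ℕ) (hp : p.Prime) {R : Type*} [CommRing R] (a b : R) :
    (p : R) * frobDefect p a b = (a + b) ^ p - a ^ p - b ^ p := by
  have hIcc : Finset.Icc 1 (p - 1) = Finset.Ico 1 p := by
    ext i; have := hp.two_le; simp only [Finset.mem_Icc, Finset.mem_Ico]; omega
  rw [add_pow, Finset.sum_range_succ, Finset.range_eq_Ico, Finset.sum_eq_sum_Ico_succ_bot hp.pos,
    frobDefect, hIcc, Finset.mul_sum]
  simp only [pow_zero, one_mul, Nat.sub_zero, Nat.choose_zero_right, Nat.cast_one, mul_one,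
    Nat.sub_self, Nat.choose_self, zero_add]
  rw [add_sub_cancel_right, add_sub_cancel_left]
  refine Finset.sum_congr rfl fun i hi => ?_
  rw [Finset.mem_Ico] at hi
  have h : p * (p.choose i / p) = p.choose i :=
    Nat.mul_div_cancel' (hp.dvd_choose_self (by omega) hi.2)
  conv_rhs => rw [← h]
  push_cast
  ring

theorem frobDefect_mul (p : ℕ) {R : Type*} [CommRing R] (c a b : R) :
    frobDefect p (c * a) (c * b) = c ^ p * frobDefect p a b := by
  rw [frobDefect, frobDefect, Finset.mul_sum]
  refine Finset.sum_congr rfl fun i hi => ?_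
  rw [Finset.mem_Icc] at hi
  have h : c ^ p = c ^ i * c ^ (p - i) := by rw [← pow_add]; congr 1; omega
  rw [h, mul_pow, mul_pow]
  ring

theorem frobDefect_comm (p : ℕ) {R : Type*} [CommRing R] (a b : R) :
    frobDefect p a b = frobDefect p b a := by
  refine Finset.sum_nbij' (p - ·) (p - ·) ?_ ?_ ?_ ?_ ?_ <;> intro i hi <;>
    simp only [Finset.mem_Icc] at hi ⊢
  · omega
  · omega
  · omega
  · omega
  · rw [Nat.choose_symm (by omega), Nat.sub_sub_self (by omega)]
    ring

theorem frobDefect_cocycle (p : ℕ) (hp : p.Prime) {R : Type*} [CommRing R] (a b c : R) :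
    frobDefect p a b + frobDefect p (a + b) c = frobDefect p b c + frobDefect p a (b + c) := by
  have key : ∀ x y z : MvPolynomial (Fin 3) ℤ,
      frobDefect p x y + frobDefect p (x + y) z = frobDefect p y z + frobDefect p x (y + z) := by
    intro x y z
    have h0 : (p : MvPolynomial (Fin 3) ℤ) ≠ 0 := Nat.cast_ne_zero.2 hp.ne_zero
    refine mul_left_cancel₀ h0 ?_
    simp only [mul_add, natCast_mul_frobDefect p hp]
    ring
  have h := congrArg (MvPolynomial.eval₂Hom (Int.castRingHom R) ![a, b, c])
    (key (MvPolynomial.X 0) (MvPolynomial.X 1) (MvPolynomial.X 2))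
  simp only [map_add, map_frobDefect] at h
  simpa using h

theorem frobDefect_one_sub (p : ℕ) (hp : p.Prime) (hodd : Odd p) {R : Type*} [CommRing R] (a : R) :
    frobDefect p a (1 - a) = -frobDefect p (-a) 1 := by
  have key : ∀ x : Polynomial ℤ, frobDefect p x (1 - x) = -frobDefect p (-x) 1 := by
    intro x
    have h0 : (p : Polynomial ℤ) ≠ 0 := Nat.cast_ne_zero.2 hp.ne_zero
    refine mul_left_cancel₀ h0 ?_
    rw [mul_neg, natCast_mul_frobDefect p hp, natCast_mul_frobDefect p hp, hodd.neg_pow,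
      neg_add_eq_sub]
    ring
  have h := congrArg (Polynomial.eval₂RingHom (Int.castRingHom R) a) (key Polynomial.X)
  simp only [map_neg, map_frobDefect] at h
  simpa using h

theorem natCast_choose_pred_eq_neg_one_pow (p : ℕ) (hp : p.Prime) {k : Type*} [CommRing k]
    [CharP k p] (j : ℕ) (hj : j < p) : (((p - 1).choose j : ℕ) : k) = (-1) ^ j := by
  induction j with
  | zero => simp
  | succ j ih =>
    have h : p.choose (j + 1) = (p - 1).choose j + (p - 1).choose (j + 1) := by
      conv_lhs => rw [← Nat.sub_add_cancel hp.one_le]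
      exact Nat.choose_succ_succ _ _
    have h0 : ((p.choose (j + 1) : ℕ) : k) = 0 :=
      (CharP.cast_eq_zero_iff k p _).2 (hp.dvd_choose_self (by omega) hj)
    rw [h, Nat.cast_add, ih (by omega)] at h0
    rw [pow_succ]
    linear_combination h0

theorem kontsevichLog_eq_frobDefect (p : ℕ) (hp : p.Prime) (hodd : Odd p) {k : Type*} [Field k]
    [CharP k p] (s : k) : kontsevichLog p s = frobDefect p s (1 - s) := by
  rw [frobDefect_one_sub p hp hodd, kontsevichLog, frobDefect, ← Finset.sum_neg_distrib]
  refine Finset.sum_congr rfl fun i hi => ?_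
  rw [Finset.mem_Icc] at hi
  obtain ⟨j, rfl⟩ : ∃ j, i = j + 1 := ⟨i - 1, by omega⟩
  have hi0 : ((j + 1 : ℕ) : k) ≠ 0 := by
    rw [Ne, CharP.cast_eq_zero_iff k p]
    exact fun h => by have := Nat.le_of_dvd (by omega) h; omega
  have h : (p.choose (j + 1) / p) * (j + 1) = (p - 1).choose j := by
    refine Nat.eq_of_mul_eq_mul_left hp.pos ?_
    rw [← mul_assoc, Nat.mul_div_cancel' (hp.dvd_choose_self (by omega) (by omega))]
    have := Nat.add_one_mul_choose_eq (p - 1) j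
    rw [Nat.sub_add_cancel hp.one_le] at this
    exact this.symm
  have h' : ((p.choose (j + 1) / p : ℕ) : k) * ((j + 1 : ℕ) : k) = (-1) ^ j := by
    rw [← Nat.cast_mul, h, natCast_choose_pred_eq_neg_one_pow p hp j (by omega)]
  have hsq : ((-1 : k) ^ j) * (-1) ^ j = 1 := by rw [← mul_pow]; simp
  rw [eq_div_of_mul_eq hi0 h', one_pow, neg_pow s, pow_succ (-1 : k) j]
  field_simp
  linear_combination (-s ^ (j + 1)) * hsq

theorem kontsevichLog_div (p : ℕ) (hp : p.Prime) (hodd : Odd p) {k : Type*} [Field k]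
    [CharP k p] (a c : k) (hc : c ≠ 0) :
    kontsevichLog p (a / c) = frobDefect p a (c - a) / c ^ p := by
  rw [kontsevichLog_eq_frobDefect p hp hodd, eq_div_iff (pow_ne_zero _ hc), mul_comm,
    ← frobDefect_mul]
  congr 1 <;> field_simp

theorem DualNumber.ringInverse_eq_inv {k : Type*} [Field k] (d : DualNumber k) (hd : fst d ≠ 0) :
    Ring.inverse d = d⁻¹ := by
  have h : d * d⁻¹ = 1 := TrivSqZeroExt.mul_inv_cancel hd
  have hu : IsUnit d := IsUnit.of_mul_eq_one _ h
  rw [← one_mul (Ring.inverse d), ← h, mul_comm d, Ring.mul_inverse_cancel_right _ _ hu]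

theorem li2p_mul_inverse (p : ℕ) (hp : p.Prime) (hodd : Odd p) {k : Type*} [Field k] [CharP k p]
    (n d : DualNumber k) (hd : fst d ≠ 0) :
    li2p p (n * Ring.inverse d) =
      (snd n * fst d - fst n * snd d) ^ p / (fst n ^ p * (fst d - fst n) ^ p) *
        (frobDefect p (fst n) (fst d - fst n) / fst d ^ p) := by
  have hf : fst (n * Ring.inverse d) = fst n / fst d := by
    rw [DualNumber.ringInverse_eq_inv d hd, fst_mul, fst_inv, div_eq_mul_inv]
  have hs : snd (n * Ring.inverse d) = (snd n * fst d - fst n * snd d) / fst d ^ 2 := by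
    rw [DualNumber.ringInverse_eq_inv d hd]
    simp [snd_inv]
    field_simp
    ring
  rw [li2p, hf, hs, kontsevichLog_div p hp hodd _ _ hd, one_sub_div hd, ← mul_pow, ← mul_pow,
    ← div_pow, ← div_pow]
  congr 2
  field_simp

theorem li2p_eq (p : ℕ) (hp : p.Prime) (hodd : Odd p) {k : Type*} [Field k] [CharP k p]
    (x : DualNumber k) :
    li2p p x = snd x ^ p / (fst x ^ p * (1 - fst x) ^ p) * frobDefect p (fst x) (1 - fst x) := by
  rw [li2p, kontsevichLog_eq_frobDefect p hp hodd]

theorem DualNumber.one_sub_inverse_mul_inverse {k : Type*} [Field k] (x y : DualNumber k)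
    (hx0 : fst x ≠ 0) (hy0 : fst y ≠ 0) (hy1 : fst y ≠ 1) :
    (1 - Ring.inverse x) * Ring.inverse (1 - Ring.inverse y) =
      ((1 - x) * y) * Ring.inverse ((1 - y) * x) := by
  have hy1' : 1 - fst y ≠ 0 := sub_ne_zero.2 hy1.symm
  have h1 : fst (1 - y⁻¹) ≠ 0 := by
    rw [fst_sub, fst_one, fst_inv, sub_ne_zero, ne_comm, Ne, inv_eq_one]
    exact hy1
  have h2 : fst ((1 - y) * x) ≠ 0 := by
    rw [fst_mul, fst_sub, fst_one]
    exact mul_ne_zero hy1' hx0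
  have hx : x * x⁻¹ = 1 := TrivSqZeroExt.mul_inv_cancel hx0
  have hy : y * y⁻¹ = 1 := TrivSqZeroExt.mul_inv_cancel hy0
  rw [DualNumber.ringInverse_eq_inv x hx0, DualNumber.ringInverse_eq_inv y hy0,
    DualNumber.ringInverse_eq_inv _ h1, DualNumber.ringInverse_eq_inv _ h2]
  have e1 : (1 - y⁻¹) * (1 - y⁻¹)⁻¹ = 1 := TrivSqZeroExt.mul_inv_cancel h1
  have e2 : ((1 - y) * x) * ((1 - y) * x)⁻¹ = 1 := TrivSqZeroExt.mul_inv_cancel h2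
  generalize (1 - y⁻¹)⁻¹ = v at *
  generalize ((1 - y) * x)⁻¹ = w at *
  have e3 : (1 - x⁻¹) * ((1 - y) * x) = ((1 - x) * y) * (1 - y⁻¹) := by
    linear_combination (y - 1) * hx + (1 - x) * hy
  linear_combination (-(1 - x⁻¹) * v) * e2 + (v * w) * e3 + ((1 - x) * y * w) * e1

/-- Five-term functional equation for `ℓi₂^(p)`: for `x, y ∈ (k[t]/(t²))^♭` with
`x − y` a unit,
`ℓi₂^(p)(x) − ℓi₂^(p)(y) + ℓi₂^(p)(y/x) − ℓi₂^(p)((1−x⁻¹)/(1−y⁻¹)) + ℓi₂^(p)((1−x)/(1−y)) = 0`. -/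
theorem li2p_five_term (p : ℕ) [Fact p.Prime] (hp5 : 5 ≤ p)
    (k : Type*) [Field k] [CharP k p] (x y : DualNumber k)
    (hx0 : fst x ≠ 0) (hx1 : fst x ≠ 1) (hy0 : fst y ≠ 0) (hy1 : fst y ≠ 1)
    (hxy : fst x ≠ fst y) :
    li2p p x - li2p p y + li2p p (y * Ring.inverse x) -
        li2p p ((1 - Ring.inverse x) * Ring.inverse (1 - Ring.inverse y)) +
        li2p p ((1 - x) * Ring.inverse (1 - y)) = 0 := by
  have hp : p.Prime := Fact.out
  have hodd : Odd p := hp.odd_of_ne_two (by omega)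
  have hx1' : 1 - fst x ≠ 0 := sub_ne_zero.2 hx1.symm
  have hy1' : 1 - fst y ≠ 0 := sub_ne_zero.2 hy1.symm
  have hxy' : fst x - fst y ≠ 0 := sub_ne_zero.2 hxy
  rw [DualNumber.one_sub_inverse_mul_inverse x y hx0 hy0 hy1,
    li2p_mul_inverse p hp hodd y x hx0,
    li2p_mul_inverse p hp hodd _ ((1 - y) * x) (by simpa using ⟨hy1', hx0⟩),
    li2p_mul_inverse p hp hodd _ (1 - y) (by simpa using hy1'), li2p_eq p hp hodd x,
    li2p_eq p hp hodd y]
  simp only [fst_mul, snd_mul, fst_sub, snd_sub, fst_one, snd_one, op_smul_eq_smul, smul_eq_mul,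
    zero_sub]
  generalize fst x = s at *
  generalize fst y = u at *
  generalize snd x = a
  generalize snd y = b
  have e1 : ((1 - s) * b + u * -a) * ((1 - u) * s) - (1 - s) * u * ((1 - u) * a + s * -b) =
      b * (s * (1 - s)) - a * (u * (1 - u)) := by ring
  have e2 : (1 - u) * s - (1 - s) * u = s - u := by ring
  have e3 : 1 - u - (1 - s) = s - u := by ring
  have e4 : -a * (1 - u) - (1 - s) * -b = b * (1 - s) - a * (1 - u) := by ring
  rw [e1, e2, e3, e4]
  have h1 := frobDefect_cocycle p hp ((s - u) * s) ((s - u) * (1 - s)) ((1 - s) * u)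
  have h2 := frobDefect_cocycle p hp (u * (1 - s)) (u * (s - u)) ((s - u) * (1 - u))
  rw [frobDefect_mul, show (s - u) * s + (s - u) * (1 - s) = s - u by ring,
    show (s - u) * (1 - s) + (1 - s) * u = s * (1 - s) by ring, mul_comm (s - u) (1 - s),
    mul_comm (s - u) s, frobDefect_mul, frobDefect_mul, frobDefect_comm p (s - u) ((1 - s) * u),
    frobDefect_comm p (s - u) u, frobDefect_comm p (s - u) (1 - s)] at h1
  rw [frobDefect_mul, show u * (1 - s) + u * (s - u) = (1 - u) * u by ring,
    show u * (s - u) + (s - u) * (1 - u) = s - u by ring, mul_comm (s - u) (1 - u),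
    frobDefect_mul, mul_comm u (s - u), mul_comm (1 - u) (s - u), mul_comm u (1 - s),
    frobDefect_mul] at h2
  have hsub (v w : k) : (v - w) ^ p = v ^ p - w ^ p := sub_pow_expChar v w
  rw [hsub (b * s), hsub (b * (s * (1 - s))), hsub (b * (1 - s))]
  simp only [mul_pow]
  have hS := pow_ne_zero p hx0
  have hU := pow_ne_zero p hy0
  have hS1 := pow_ne_zero p hx1'
  have hU1 := pow_ne_zero p hy1'
  have hSU := pow_ne_zero p hxy'
  generalize s ^ p = S at *
  generalize u ^ p = U at *
  generalize (1 - s) ^ p = S₁ at *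
  generalize (1 - u) ^ p = U₁ at *
  generalize (s - u) ^ p = D at *
  generalize frobDefect p s (1 - s) = q₁ at *
  generalize frobDefect p u (1 - u) = q₂ at *
  generalize frobDefect p u (s - u) = q₃ at *
  generalize frobDefect p ((1 - s) * u) (s - u) = q₄ at *
  generalize frobDefect p (1 - s) (s - u) = q₅ at *
  linear_combination (norm := skip) (a ^ p / (S * S₁ * D)) * h1 + (b ^ p / (U * U₁ * D)) * h2
  field_simp
  ring
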